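/- Almost-supermartingale rate lemma: let (w_N, F_N) be a nonnegative adapted stochastic sequence satisfying E(w_N | F_{N−1}) ≤ (1 − μ/N) w_{N−1} + d_N h_N / N^{1+p} almost surely for all N ≥ N₁, where μ > p + κ, each d_N is F_{N−1}-measurable, nonnegative and almost surely bounded, and (h_N) is a positive sequence, nonincreasing for N ≥ N₁, with h_{N−1}/h_N ≤ 1 + κ/N for all N ≥ N₁ and (log N)/(N h_N) → 0. Then for every ν > 1, w_N = o((log N)^ν h_N / N^p) almost surely as N → ∞. -/

import Mathlib

open MeasureTheory Filter

/-!
Choose `1 < s < ν` and multiply `w N` by the weight `a N = N ^ p / (h N * (log N) ^ s)`. Since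
`h (N - 1) ≤ exp (κ / N) * h N` and `μ - κ > p`, the contraction factor `1 - μ / N` eventually
absorbs the growth of `a`, that is `a N * (1 - μ / N) ≤ a (N - 1)`, while the perturbation becomes
`d N / (N * (log N) ^ s)`, which is almost surely summable. By the Robbins–Siegmund theorem
`a N * w N` converges almost surely, and the spare factor `(log N) ^ (s - ν)` tends to zero.
-/

section RobbinsSiegmund

variable {Ω : Type*} {m0 : MeasurableSpace Ω} {P : Measure Ω} [IsFiniteMeasure P]
  {ℱ : Filtration ℕ m0} {v ξ : ℕ → Ω → ℝ}

theorem ae_exists_tendsto_of_supermartingale_of_nonneg {S : ℕ → Ω → ℝ}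
    (hS : Supermartingale S ℱ P) (hS_nonneg : ∀ n, 0 ≤ᵐ[P] S n) :
    ∀ᵐ ω ∂P, ∃ c, Tendsto (fun n => S n ω) atTop (nhds c) := by
  have norm_bound (n : ℕ) : eLpNorm ((-S) n) 1 P ≤ (∫ ω, S 0 ω ∂P).toNNReal := by
    have integral_le : ∫ ω, S n ω ∂P ≤ ∫ ω, S 0 ω ∂P := by
      simpa only [setIntegral_univ] using hS.setIntegral_le (Nat.zero_le n) MeasurableSet.univ
    calc eLpNorm ((-S) n) 1 P
        = ∫⁻ ω, ‖S n ω‖ₑ ∂P := by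
          rw [Pi.neg_apply, eLpNorm_neg, eLpNorm_one_eq_lintegral_enorm]
      _ = ENNReal.ofReal (∫ ω, S n ω ∂P) := by
          rw [ofReal_integral_eq_lintegral_ofReal (hS.integrable n) (hS_nonneg n)]
          refine lintegral_congr_ae ?_
          filter_upwards [hS_nonneg n] with ω hω using Real.enorm_eq_ofReal hω
      _ ≤ (∫ ω, S 0 ω ∂P).toNNReal := ENNReal.ofReal_le_ofReal integral_le
  filter_upwards [hS.neg.exists_ae_tendsto_of_bdd norm_bound] with ω ⟨c, hc⟩
  exact ⟨-c, by simpa using hc.neg⟩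

/-- The event that the accumulated drift `ξ 0 + ⋯ + ξ (n - 1)` is at most `K`. -/
def driftWithin (ξ : ℕ → Ω → ℝ) (K : ℝ) (n : ℕ) : Set Ω :=
  {ω | ∑ j ∈ Finset.range n, ξ j ω ≤ K}

/-- The part of a budget `K` that the drift `ξ` has not used up before time `n`; it is zero once
the budget is exceeded. -/
def unspentBudget (ξ : ℕ → Ω → ℝ) (K : ℝ) (n : ℕ) (ω : Ω) : ℝ :=
  max (K - ∑ j ∈ Finset.range n, ξ j ω) 0

/-- The process `v` killed when its accumulated drift exceeds the budget `K`, plus the unspent part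
of that budget. Adding the latter makes the drift of `v` disappear: see
`supermartingale_budgetedProcess`. -/
noncomputable def budgetedProcess (v ξ : ℕ → Ω → ℝ) (K : ℝ) (n : ℕ) : Ω → ℝ :=
  (driftWithin ξ K n).indicator (v n) + unspentBudget ξ K n

theorem stronglyMeasurable_sum_range (hξ : StronglyAdapted ℱ ξ) {n k : ℕ} (hnk : n ≤ k + 1) :
    StronglyMeasurable[ℱ k] fun ω => ∑ j ∈ Finset.range n, ξ j ω :=
  Finset.stronglyMeasurable_fun_sum _ fun j hj =>
    (hξ j).mono (ℱ.mono (Nat.lt_succ_iff.1 ((Finset.mem_range.1 hj).trans_le hnk)))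

theorem measurableSet_driftWithin (hξ : StronglyAdapted ℱ ξ) (K : ℝ) {n k : ℕ}
    (hnk : n ≤ k + 1) : MeasurableSet[ℱ k] (driftWithin ξ K n) :=
  (stronglyMeasurable_sum_range hξ hnk).measurable measurableSet_Iic

theorem stronglyMeasurable_unspentBudget (hξ : StronglyAdapted ℱ ξ) (K : ℝ) {n k : ℕ}
    (hnk : n ≤ k + 1) : StronglyMeasurable[ℱ k] (unspentBudget ξ K n) :=
  ((continuous_const.sub continuous_id).max continuous_const).comp_stronglyMeasurable
    (stronglyMeasurable_sum_range hξ hnk)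

theorem integrable_unspentBudget (hξ : StronglyAdapted ℱ ξ) (hξ_nonneg : ∀ n, 0 ≤ᵐ[P] ξ n)
    (K : ℝ) (n : ℕ) : Integrable (unspentBudget ξ K n) P := by
  refine .of_bound ((stronglyMeasurable_unspentBudget hξ K n.le_succ).mono
    (ℱ.le n)).aestronglyMeasurable (max K 0) ?_
  filter_upwards [ae_all_iff.2 hξ_nonneg] with ω hω
  rw [unspentBudget, Real.norm_of_nonneg (le_max_right _ _)]
  gcongr
  exact sub_le_self K (Finset.sum_nonneg fun j _ => hω j)

theorem condExp_budgetedProcess_succ {n : ℕ} (hv_int : Integrable (v (n + 1)) P)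
    (hξ : StronglyAdapted ℱ ξ) (hξ_nonneg : ∀ n, 0 ≤ᵐ[P] ξ n) (K : ℝ) :
    P[budgetedProcess v ξ K (n + 1) | ℱ n] =ᵐ[P]
      (driftWithin ξ K (n + 1)).indicator (P[v (n + 1) | ℱ n]) + unspentBudget ξ K (n + 1) := by
  have within_meas : MeasurableSet[ℱ n] (driftWithin ξ K (n + 1)) :=
    measurableSet_driftWithin hξ K le_rfl
  have budget_int := integrable_unspentBudget hξ hξ_nonneg K (n + 1)
  calc P[budgetedProcess v ξ K (n + 1) | ℱ n]
      =ᵐ[P] P[(driftWithin ξ K (n + 1)).indicator (v (n + 1)) | ℱ n] +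
          P[unspentBudget ξ K (n + 1) | ℱ n] :=
        condExp_add (hv_int.indicator (ℱ.le n _ within_meas)) budget_int (ℱ n)
    _ = P[(driftWithin ξ K (n + 1)).indicator (v (n + 1)) | ℱ n] + unspentBudget ξ K (n + 1) := by
        rw [condExp_of_stronglyMeasurable (ℱ.le n)
          (stronglyMeasurable_unspentBudget hξ K le_rfl) budget_int]
    _ =ᵐ[P] (driftWithin ξ K (n + 1)).indicator (P[v (n + 1) | ℱ n]) +
          unspentBudget ξ K (n + 1) :=
        (condExp_indicator hv_int within_meas).add .rfl

theorem budgetedProcess_nonneg {n : ℕ} {ω : Ω} (hv : 0 ≤ v n ω) (K : ℝ) :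
    0 ≤ budgetedProcess v ξ K n ω :=
  add_nonneg (Set.indicator_apply_nonneg fun _ => hv) (le_max_right _ _)

theorem unspentBudget_of_mem {K : ℝ} {n : ℕ} {ω : Ω} (hω : ω ∈ driftWithin ξ K n) :
    unspentBudget ξ K n ω = K - ∑ j ∈ Finset.range n, ξ j ω :=
  max_eq_left (sub_nonneg.2 hω)

theorem unspentBudget_of_notMem {K : ℝ} {n : ℕ} {ω : Ω} (hω : ω ∉ driftWithin ξ K n) :
    unspentBudget ξ K n ω = 0 :=
  max_eq_right (sub_nonpos.2 (not_le.1 hω).le)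

theorem budgetedProcess_of_mem {K : ℝ} {n : ℕ} {ω : Ω} (hω : ω ∈ driftWithin ξ K n) :
    budgetedProcess v ξ K n ω = v n ω + (K - ∑ j ∈ Finset.range n, ξ j ω) := by
  rw [budgetedProcess, Pi.add_apply, Set.indicator_of_mem hω, unspentBudget_of_mem hω]

theorem mem_driftWithin_of_succ {K : ℝ} {n : ℕ} {ω : Ω} (hξ_nonneg : 0 ≤ ξ n ω)
    (hω : ω ∈ driftWithin ξ K (n + 1)) : ω ∈ driftWithin ξ K n :=
  (le_add_of_nonneg_right hξ_nonneg).trans ((Finset.sum_range_succ (ξ · ω) n).ge.trans hω)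

theorem condExp_budgetedProcess_succ_le {n : ℕ} (hv_nonneg : 0 ≤ᵐ[P] v n)
    (hv_int : Integrable (v (n + 1)) P) (hξ : StronglyAdapted ℱ ξ) (hξ_nonneg : ∀ n, 0 ≤ᵐ[P] ξ n)
    (K : ℝ) (hcond : P[v (n + 1) | ℱ n] ≤ᵐ[P] v n + ξ n) :
    P[budgetedProcess v ξ K (n + 1) | ℱ n] ≤ᵐ[P] budgetedProcess v ξ K n := by
  filter_upwards [condExp_budgetedProcess_succ hv_int hξ hξ_nonneg K, hcond, hv_nonneg,
    hξ_nonneg n] with ω condExp_eq condExp_le hvω hξω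
  rw [condExp_eq, Pi.add_apply]
  by_cases hω : ω ∈ driftWithin ξ K (n + 1)
  · rw [Set.indicator_of_mem hω, unspentBudget_of_mem hω,
      budgetedProcess_of_mem (mem_driftWithin_of_succ hξω hω), Finset.sum_range_succ]
    rw [Pi.add_apply] at condExp_le
    linarith
  · rw [Set.indicator_of_notMem hω, unspentBudget_of_notMem hω, add_zero]
    exact budgetedProcess_nonneg hvω K

theorem supermartingale_budgetedProcess (hv : StronglyAdapted ℱ v) (hv_nonneg : ∀ n, 0 ≤ᵐ[P] v n)
    (hv_int : ∀ n, Integrable (v n) P) (hξ : StronglyAdapted ℱ ξ) (hξ_nonneg : ∀ n, 0 ≤ᵐ[P] ξ n)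
    (hcond : ∀ n, P[v (n + 1) | ℱ n] ≤ᵐ[P] v n + ξ n) (K : ℝ) :
    Supermartingale (budgetedProcess v ξ K) ℱ P := by
  have within_meas (n : ℕ) : MeasurableSet[ℱ n] (driftWithin ξ K n) :=
    measurableSet_driftWithin hξ K n.le_succ
  exact supermartingale_nat
    (fun n => ((hv n).indicator (within_meas n)).add
      (stronglyMeasurable_unspentBudget hξ K n.le_succ))
    (fun n => ((hv_int n).indicator (ℱ.le n _ (within_meas n))).add
      (integrable_unspentBudget hξ hξ_nonneg K n))
    (fun n => condExp_budgetedProcess_succ_le (hv_nonneg n) (hv_int (n + 1)) hξ hξ_nonneg K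
      (hcond n))

/-- The **Robbins–Siegmund theorem**. Where the total drift is finite it stays within some integer
budget `K`, so there `v` differs from the convergent `budgetedProcess v ξ K` by a convergent term.
-/
theorem ae_exists_tendsto_of_condExp_succ_le (hv : StronglyAdapted ℱ v)
    (hv_nonneg : ∀ n, 0 ≤ᵐ[P] v n) (hv_int : ∀ n, Integrable (v n) P) (hξ : StronglyAdapted ℱ ξ)
    (hξ_nonneg : ∀ n, 0 ≤ᵐ[P] ξ n) (hcond : ∀ n, P[v (n + 1) | ℱ n] ≤ᵐ[P] v n + ξ n) :
    ∀ᵐ ω ∂P, Summable (fun n => ξ n ω) → ∃ c, Tendsto (fun n => v n ω) atTop (nhds c) := by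
  have budgeted_tendsto (K : ℕ) :
      ∀ᵐ ω ∂P, ∃ c, Tendsto (fun n => budgetedProcess v ξ K n ω) atTop (nhds c) := by
    refine ae_exists_tendsto_of_supermartingale_of_nonneg
      (supermartingale_budgetedProcess hv hv_nonneg hv_int hξ hξ_nonneg hcond K) fun n => ?_
    filter_upwards [hv_nonneg n] with ω hω using budgetedProcess_nonneg hω K
  filter_upwards [ae_all_iff.2 budgeted_tendsto, ae_all_iff.2 hξ_nonneg] with ω hω hξω hsum
  obtain ⟨K, hK⟩ := exists_nat_ge (∑' n, ξ n ω)
  have drift_le (n : ℕ) : ω ∈ driftWithin ξ K n :=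
    (hsum.sum_le_tsum _ fun j _ => hξω j).trans hK
  obtain ⟨c, hc⟩ := hω K
  refine ⟨c - (K - ∑' n, ξ n ω),
    (hc.sub (hsum.hasSum.tendsto_sum_nat.const_sub (K : ℝ))).congr fun n => ?_⟩
  rw [budgetedProcess_of_mem (drift_le n), add_sub_cancel_right]

theorem ae_exists_tendsto_of_eventually_condExp_succ_le (hv : StronglyAdapted ℱ v)
    (hv_nonneg : ∀ n, 0 ≤ᵐ[P] v n) (hv_int : ∀ n, Integrable (v n) P) (hξ : StronglyAdapted ℱ ξ)
    (hξ_nonneg : ∀ n, 0 ≤ᵐ[P] ξ n)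
    (hcond : ∀ᶠ n in atTop, P[v (n + 1) | ℱ n] ≤ᵐ[P] v n + ξ n) :
    ∀ᵐ ω ∂P, Summable (fun n => ξ n ω) → ∃ c, Tendsto (fun n => v n ω) atTop (nhds c) := by
  obtain ⟨M, hM⟩ := eventually_atTop.1 hcond
  let ℱM : Filtration ℕ m0 :=
    ⟨fun n => ℱ (M + n), fun _ _ hij => ℱ.mono (by gcongr), fun n => ℱ.le (M + n)⟩
  have shifted := ae_exists_tendsto_of_condExp_succ_le (ℱ := ℱM) (v := fun n => v (M + n))
    (ξ := fun n => ξ (M + n)) (fun n => hv (M + n)) (fun n => hv_nonneg (M + n))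
    (fun n => hv_int (M + n)) (fun n => hξ (M + n)) (fun n => hξ_nonneg (M + n))
    fun n => hM (M + n) (Nat.le_add_right M n)
  filter_upwards [shifted] with ω hω hsum
  obtain ⟨c, hc⟩ := hω (hsum.comp_injective (add_right_injective M))
  refine ⟨c, (tendsto_add_atTop_iff_nat M).1 ?_⟩
  simpa only [add_comm] using hc

theorem ae_exists_tendsto_mul_of_eventually_condExp_succ_le {w : ℕ → Ω → ℝ} {a b : ℕ → ℝ}
    (ha : ∀ n, 0 ≤ a n) (hab : ∀ᶠ n in atTop, a (n + 1) * b n ≤ a n)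
    (hw : StronglyAdapted ℱ w) (hw_nonneg : ∀ n, 0 ≤ᵐ[P] w n) (hw_int : ∀ n, Integrable (w n) P)
    (hξ : StronglyAdapted ℱ ξ) (hξ_nonneg : ∀ n, 0 ≤ᵐ[P] ξ n)
    (hcond : ∀ᶠ n in atTop, ∀ᵐ ω ∂P, (P[w (n + 1) | ℱ n]) ω ≤ b n * w n ω + ξ n ω) :
    ∀ᵐ ω ∂P, Summable (fun n => a (n + 1) * ξ n ω) →
      ∃ c, Tendsto (fun n => a n * w n ω) atTop (nhds c) := by
  refine ae_exists_tendsto_of_eventually_condExp_succ_le (v := fun n => a n • w n)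
    (ξ := fun n => a (n + 1) • ξ n) (fun n => (hw n).const_smul (a n)) (fun n => ?_)
    (fun n => (hw_int n).smul (a n)) (fun n => (hξ n).const_smul _) (fun n => ?_) ?_
  · filter_upwards [hw_nonneg n] with ω hω using mul_nonneg (ha n) hω
  · filter_upwards [hξ_nonneg n] with ω hω using mul_nonneg (ha (n + 1)) hω
  · filter_upwards [hab, hcond] with n weight_le condExp_le
    filter_upwards [condExp_smul (μ := P) (a (n + 1)) (w (n + 1)) (ℱ n), condExp_le, hw_nonneg n]
      with ω condExp_eq hω hwω
    calc (P[a (n + 1) • w (n + 1) | ℱ n]) ω = a (n + 1) * (P[w (n + 1) | ℱ n]) ω := condExp_eq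
      _ ≤ a (n + 1) * (b n * w n ω + ξ n ω) := mul_le_mul_of_nonneg_left hω (ha (n + 1))
      _ = a (n + 1) * b n * w n ω + a (n + 1) * ξ n ω := by ring
      _ ≤ a n * w n ω + a (n + 1) * ξ n ω := by
        gcongr

end RobbinsSiegmund

theorem summable_one_div_mul_log_rpow {s : ℝ} (hs : 1 < s) :
    Summable fun n : ℕ => 1 / ((n : ℝ) * Real.log n ^ s) := by
  have nonneg (n : ℕ) : 0 ≤ 1 / ((n : ℝ) * Real.log n ^ s) :=
    one_div_nonneg.2 (mul_nonneg n.cast_nonneg (Real.rpow_nonneg (Real.log_natCast_nonneg n) s))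
  have antitone : ∀ᶠ n : ℕ in atTop, 1 / (((n + 1 : ℕ) : ℝ) * Real.log (n + 1 : ℕ) ^ s) ≤
      1 / ((n : ℝ) * Real.log n ^ s) := by
    filter_upwards [eventually_gt_atTop 1] with n hn
    have hn' : (1 : ℝ) < n := Nat.one_lt_cast.2 hn
    have hlog : 0 < Real.log n := Real.log_pos hn'
    gcongr <;> exact n.le_succ
  rw [← summable_condensed_iff_of_eventually_nonneg (.of_forall nonneg) antitone]
  refine ((Real.summable_one_div_nat_rpow.2 hs).mul_left (1 / Real.log 2 ^ s)).congr fun k => ?_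
  rw [Nat.cast_pow, Nat.cast_ofNat, Real.log_pow,
    Real.mul_rpow k.cast_nonneg (Real.log_nonneg one_le_two)]
  field_simp

theorem eventually_rpow_mul_exp_neg_div_le_sub_one_rpow {p q : ℝ} (hpq : p < q) :
    ∀ᶠ x : ℝ in atTop, x ^ p * Real.exp (-(q / x)) ≤ (x - 1) ^ p := by
  have log_lim : Tendsto (fun x : ℝ => -p * (x * Real.log (1 + -1 / x))) atTop (nhds p) := by
    simpa using (Real.tendsto_mul_log_one_add_div_atTop (-1)).const_mul (-p)
  filter_upwards [log_lim.eventually_le_const hpq, eventually_gt_atTop 1] with x hle hx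
  have hx0 : 0 < x := one_pos.trans hx
  have hx1 : 0 < x - 1 := sub_pos.2 hx
  have log_eq : Real.log (1 + -1 / x) = Real.log (x - 1) - Real.log x := by
    rw [← Real.log_div hx1.ne' hx0.ne']
    congr 1
    field_simp
    ring
  have exponent_le : Real.log x * p - q / x ≤ Real.log (x - 1) * p := by
    rw [log_eq] at hle
    have log_ratio_le : -p * (Real.log (x - 1) - Real.log x) ≤ q / x := by
      rw [le_div_iff₀ hx0]
      linarith
    linarith
  rw [Real.rpow_def_of_pos hx0, Real.rpow_def_of_pos hx1, ← Real.exp_add]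
  exact Real.exp_le_exp.2 (by linarith)

theorem eventually_succ_rpow_mul_one_sub_div_le {h : ℕ → ℝ} {p κ mu : ℝ} (hmu : p + κ < mu)
    (hh_pos : ∀ N, 0 < h N)
    (hh_ratio : ∀ᶠ N : ℕ in atTop, h N ≤ (1 + κ / (N + 1 : ℕ)) * h (N + 1)) :
    ∀ᶠ N : ℕ in atTop,
      ((N + 1 : ℕ) : ℝ) ^ p * (1 - mu / (N + 1 : ℕ)) / h (N + 1) ≤ (N : ℝ) ^ p / h N := by
  have cast_succ_tendsto : Tendsto (fun N : ℕ => ((N + 1 : ℕ) : ℝ)) atTop atTop :=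
    tendsto_natCast_atTop_atTop.comp (tendsto_add_atTop_nat 1)
  filter_upwards [hh_ratio, cast_succ_tendsto.eventually
    (eventually_rpow_mul_exp_neg_div_le_sub_one_rpow (lt_sub_iff_add_lt.2 hmu))] with N hratio hpow
  rw [Nat.cast_add_one] at hratio hpow ⊢
  rw [add_sub_cancel_right] at hpow
  have ratio_le_exp : h N ≤ Real.exp (κ / (N + 1)) * h (N + 1) := by
    grw [hratio, add_comm, Real.add_one_le_exp]
    exact (hh_pos _).le
  rw [div_le_div_iff₀ (hh_pos _) (hh_pos _)]
  calc ((N : ℝ) + 1) ^ p * (1 - mu / (N + 1)) * h N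
      ≤ ((N : ℝ) + 1) ^ p * Real.exp (-(mu / (N + 1))) *
          (Real.exp (κ / (N + 1)) * h (N + 1)) := by
        gcongr
        · exact (hh_pos N).le
        · exact Real.one_sub_le_exp_neg _
    _ = ((N : ℝ) + 1) ^ p * Real.exp (-((mu - κ) / (N + 1))) * h (N + 1) := by
        rw [sub_div, neg_sub, sub_eq_neg_add, Real.exp_add]
        ring
    _ ≤ (N : ℝ) ^ p * h (N + 1) := mul_le_mul_of_nonneg_right hpow (hh_pos _).le

/-- The reciprocal of the rate `h N * (log N) ^ s / N ^ p`, by which a process is multiplied to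
measure its decay. -/
noncomputable def rateWeight (h : ℕ → ℝ) (p s : ℝ) (N : ℕ) : ℝ :=
  (N : ℝ) ^ p / (h N * Real.log N ^ s)

section RateWeight

variable {h : ℕ → ℝ}

theorem rateWeight_nonneg (hh_pos : ∀ N, 0 < h N) (p s : ℝ) (N : ℕ) : 0 ≤ rateWeight h p s N :=
  div_nonneg (Real.rpow_nonneg N.cast_nonneg p)
    (mul_nonneg (hh_pos N).le (Real.rpow_nonneg (Real.log_natCast_nonneg N) s))

theorem rateWeight_mul_div_rpow (p s : ℝ) {N : ℕ} (hN : N ≠ 0) (hh : h N ≠ 0) :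
    rateWeight h p s N * (h N / (N : ℝ) ^ (1 + p)) = 1 / ((N : ℝ) * Real.log N ^ s) := by
  have hN0 : (0 : ℝ) < N := Nat.cast_pos.2 (Nat.pos_of_ne_zero hN)
  rw [rateWeight, Real.rpow_add hN0, Real.rpow_one]
  field_simp

theorem rateWeight_mul_log_rpow_sub (p s t : ℝ) {N : ℕ} (hN : 1 < N) :
    rateWeight h p s N * Real.log N ^ (s - t) = rateWeight h p t N := by
  have hlog : 0 < Real.log N := Real.log_pos (Nat.one_lt_cast.2 hN)
  rw [rateWeight, rateWeight, Real.rpow_sub hlog]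
  field_simp

theorem tendsto_rateWeight_mul_zero {p s t c : ℝ} (hst : s < t) {x : ℕ → ℝ}
    (hx : Tendsto (fun N => rateWeight h p s N * x N) atTop (nhds c)) :
    Tendsto (fun N => rateWeight h p t N * x N) atTop (nhds 0) := by
  have log_lim : Tendsto (fun N : ℕ => Real.log N ^ (s - t)) atTop (nhds 0) := by
    simpa only [neg_sub, Function.comp_def] using
      (tendsto_rpow_neg_atTop (sub_pos.2 hst)).comp
        (Real.tendsto_log_atTop.comp tendsto_natCast_atTop_atTop)
  rw [← mul_zero c]
  refine (hx.mul log_lim).congr' ?_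
  filter_upwards [eventually_gt_atTop 1] with N hN
  rw [mul_right_comm, rateWeight_mul_log_rpow_sub p s t hN]

theorem eventually_rateWeight_succ_mul_le {p s κ mu : ℝ} (hs : 0 ≤ s) (hmu : p + κ < mu)
    (hh_pos : ∀ N, 0 < h N)
    (hh_ratio : ∀ᶠ N : ℕ in atTop, h N ≤ (1 + κ / (N + 1 : ℕ)) * h (N + 1)) :
    ∀ᶠ N : ℕ in atTop,
      rateWeight h p s (N + 1) * (1 - mu / (N + 1 : ℕ)) ≤ rateWeight h p s N := by
  filter_upwards [eventually_succ_rpow_mul_one_sub_div_le hmu hh_pos hh_ratio,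
    eventually_gt_atTop 1] with N quotient_le hN
  have hlog : 0 < Real.log N := Real.log_pos (Nat.one_lt_cast.2 hN)
  calc rateWeight h p s (N + 1) * (1 - mu / (N + 1 : ℕ))
      = ((N + 1 : ℕ) : ℝ) ^ p * (1 - mu / (N + 1 : ℕ)) / h (N + 1) /
          Real.log (N + 1 : ℕ) ^ s := by
        rw [rateWeight, div_div, div_mul_eq_mul_div]
    _ ≤ (N : ℝ) ^ p / h N / Real.log (N + 1 : ℕ) ^ s :=
        div_le_div_of_nonneg_right quotient_le
          (Real.rpow_nonneg (Real.log_natCast_nonneg (N + 1)) s)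
    _ ≤ (N : ℝ) ^ p / h N / Real.log N ^ s := by
        gcongr
        · exact div_nonneg (Real.rpow_nonneg N.cast_nonneg p) (hh_pos N).le
        · exact N.le_succ
    _ = rateWeight h p s N := div_div _ _ _

theorem summable_rateWeight_succ_mul {p s C : ℝ} (hs : 1 < s) (hh_pos : ∀ N, 0 < h N) {x : ℕ → ℝ}
    (hx_nonneg : ∀ N, 0 ≤ x N) (hx_le : ∀ N, x N ≤ C) :
    Summable fun N : ℕ =>
      rateWeight h p s (N + 1) * (x N * (h (N + 1) / ((N + 1 : ℕ) : ℝ) ^ (1 + p))) := by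
  have log_summable := (summable_nat_add_iff 1).2 (summable_one_div_mul_log_rpow hs)
  have term_eq (N : ℕ) :
      rateWeight h p s (N + 1) * (x N * (h (N + 1) / ((N + 1 : ℕ) : ℝ) ^ (1 + p))) =
        x N * (1 / (((N + 1 : ℕ) : ℝ) * Real.log (N + 1 : ℕ) ^ s)) := by
    rw [mul_left_comm, rateWeight_mul_div_rpow p s N.succ_ne_zero (hh_pos _).ne']
  have recip_nonneg (N : ℕ) : 0 ≤ 1 / (((N + 1 : ℕ) : ℝ) * Real.log (N + 1 : ℕ) ^ s) := by
    have := Real.log_natCast_nonneg (N + 1)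
    positivity
  simp only [term_eq]
  exact (log_summable.mul_left C).of_nonneg_of_le
    (fun N => mul_nonneg (hx_nonneg N) (recip_nonneg N))
    (fun N => mul_le_mul_of_nonneg_right (hx_le N) (recip_nonneg N))

end RateWeight

theorem almost_supermartingale_rate_general {Ω : Type*} {m0 : MeasurableSpace Ω} {P : Measure Ω}
    [IsFiniteMeasure P] {ℱ : Filtration ℕ m0} {p κ mu ν : ℝ} (hmu : p + κ < mu) (hν : 1 < ν)
    {h : ℕ → ℝ} (hh_pos : ∀ N, 0 < h N)
    (hh_ratio : ∀ᶠ N : ℕ in atTop, h (N - 1) ≤ (1 + κ / N) * h N)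
    {w : ℕ → Ω → ℝ} (hw : StronglyAdapted ℱ w) (hw_nonneg : ∀ N, 0 ≤ᵐ[P] w N)
    (hw_int : ∀ N, Integrable (w N) P)
    {d : ℕ → Ω → ℝ} (hd_meas : ∀ N, StronglyMeasurable[ℱ (N - 1)] (d N))
    (hd_bdd : ∀ᵐ ω ∂P, ∃ C : ℝ, ∀ N, d N ω ≤ C)
    (hcond : ∀ᶠ N : ℕ in atTop, ∀ᵐ ω ∂P, (P[w N | ℱ (N - 1)]) ω ≤
      (1 - mu / N) * w (N - 1) ω + d N ω * h N / (N : ℝ) ^ (1 + p)) :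
    ∀ᵐ ω ∂P, Tendsto (fun N : ℕ => w N ω * (N : ℝ) ^ p / (h N * Real.log N ^ ν)) atTop
      (nhds 0) := by
  obtain ⟨s, hs, hsν⟩ := exists_between hν
  have coef_nonneg (N : ℕ) : 0 ≤ h (N + 1) / ((N + 1 : ℕ) : ℝ) ^ (1 + p) :=
    div_nonneg (hh_pos _).le (Real.rpow_nonneg (Nat.cast_nonneg _) _)
  let ξ (N : ℕ) (ω : Ω) : ℝ := max (d (N + 1) ω) 0 * (h (N + 1) / ((N + 1 : ℕ) : ℝ) ^ (1 + p))
  have ξ_adapted : StronglyAdapted ℱ ξ := fun N =>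
    ((continuous_id.max continuous_const).comp_stronglyMeasurable (hd_meas (N + 1))).mul_const _
  have ξ_nonneg (N : ℕ) : 0 ≤ᵐ[P] ξ N :=
    .of_forall fun ω => mul_nonneg (le_max_right _ _) (coef_nonneg N)
  have ratio_succ := (tendsto_add_atTop_nat 1).eventually hh_ratio
  have cond_succ : ∀ᶠ N : ℕ in atTop, ∀ᵐ ω ∂P,
      (P[w (N + 1) | ℱ N]) ω ≤ (1 - mu / (N + 1 : ℕ)) * w N ω + ξ N ω := by
    filter_upwards [(tendsto_add_atTop_nat 1).eventually hcond] with N hN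
    filter_upwards [hN] with ω hω
    refine hω.trans (add_le_add le_rfl ?_)
    rw [mul_div_assoc]
    exact mul_le_mul_of_nonneg_right (le_max_left _ _) (coef_nonneg N)
  filter_upwards [hd_bdd, ae_exists_tendsto_mul_of_eventually_condExp_succ_le
    (rateWeight_nonneg hh_pos p s)
    (eventually_rateWeight_succ_mul_le (one_pos.trans hs).le hmu hh_pos ratio_succ)
    hw hw_nonneg hw_int ξ_adapted ξ_nonneg cond_succ] with ω ⟨C, hC⟩ weighted_tendsto
  obtain ⟨c, hc⟩ := weighted_tendsto <| summable_rateWeight_succ_mul hs hh_pos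
    (fun _ => le_max_right _ _) fun N => max_le_max_right 0 (hC (N + 1))
  refine (tendsto_rateWeight_mul_zero hsν hc).congr fun N => ?_
  rw [rateWeight, div_mul_eq_mul_div, mul_comm]

/-- **Almost-supermartingale rate lemma (auxiliary Lemma 9).**
Let `(w_N, ℱ_N)` be a nonnegative adapted sequence with
`E(w_N | ℱ_{N-1}) ≤ (1 − μ/N) w_{N-1} + d_N h_N/N^{1+p}` a.s. for `N ≥ N₁`,
where `μ > p + κ`, each `d_N` is `ℱ_{N-1}`-measurable, nonnegative and a.s.
bounded, and `(h_N)` is positive, nonincreasing for `N ≥ N₁`, with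
`h_{N-1}/h_N ≤ 1 + κ/N` and `log N/(N h_N) → 0`.  Then for every `ν > 1`,
`w_N = o((log N)^ν h_N/N^p)` almost surely. -/
theorem almost_supermartingale_rate
    {Ω : Type} [MeasureSpace Ω] (hprob : IsProbabilityMeasure (volume : Measure Ω))
    (ℱ : Filtration ℕ (inferInstance : MeasurableSpace Ω))
    (p κ mu : ℝ) (hp : 0 ≤ p) (hκ : 0 < κ) (hmu : p + κ < mu)
    (N₁ : ℕ) (hN₁ : 0 < N₁)
    (h : ℕ → ℝ) (hh_pos : ∀ N, 0 < h N)
    (hh_mono : ∀ N, N₁ ≤ N → h (N + 1) ≤ h N)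
    (hh_ratio : ∀ N, N₁ ≤ N → h (N - 1) ≤ (1 + κ/N) * h N)
    (hh_log : Tendsto (fun N : ℕ => Real.log N / (N * h N)) atTop (nhds 0))
    (w : ℕ → Ω → ℝ)
    (hw_adapted : Adapted ℱ w)
    (hw_nonneg : ∀ N ω, 0 ≤ w N ω)
    (hw_int : ∀ N, Integrable (w N) volume)
    (d : ℕ → Ω → ℝ)
    (hd_meas : ∀ N, StronglyMeasurable[ℱ (N - 1)] (d N))
    (hd_nonneg : ∀ N ω, 0 ≤ d N ω)
    (hd_bdd : ∀ᵐ ω ∂(volume : Measure Ω), ∃ C : ℝ, ∀ N, d N ω ≤ C)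
    (hcond : ∀ N, N₁ ≤ N →
      ∀ᵐ ω ∂(volume : Measure Ω),
        (volume[w N | ℱ (N - 1)]) ω
          ≤ (1 - mu/N) * w (N - 1) ω + d N ω * h N / (N : ℝ) ^ ((1 : ℝ) + p)) :
    ∀ ν : ℝ, 1 < ν →
      ∀ᵐ ω ∂(volume : Measure Ω),
        Tendsto (fun N : ℕ => w N ω * (N : ℝ) ^ p / (h N * (Real.log N) ^ ν))
          atTop (nhds 0) := by
  intro ν hν
  exact almost_supermartingale_rate_general hmu hν hh_pos (eventually_atTop.2 ⟨N₁, hh_ratio⟩)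
    hw_adapted.stronglyAdapted (fun N => .of_forall (hw_nonneg N)) hw_int hd_meas hd_bdd
    (eventually_atTop.2 ⟨N₁, hcond⟩)
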